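/- arXiv:1302.4567 — 5 statements merged into one kernel-verified Lean document; each statement's English description precedes it below -/
import Mathlib

section
/- Let R be a commutative ring, let a ∈ Rˣ be a unit of R, and let i, k be integers with 0 ≤ i < k. Then for every f ∈ R[[t]], the element (∏_{j=0}^{k−1}(a^{i+1−k}·(rescale a) − a^{j+1−k}·id))(f) lies in the ideal (t^{k−i}). Here the powers of a are taken in the unit group (negative exponents allowed), and the k operators a^{i+1−k}·(rescale a) − a^{j+1−k}·id for j = 0,…,k−1 pairwise commute. -/
/-! The operator `rescale a` is diagonal: it acts on the coefficient of `t ^ m` as multiplication by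
`a ^ m`, so a polynomial `p` in it acts there as multiplication by `p(a ^ m)`
(`coeff_aeval_rescaleEnd`). For `m < k - i` the index `j = m + i` lies below `k`, and the
corresponding factor `a ^ (i + 1 - k) * a ^ m - a ^ (j + 1 - k)` vanishes. -/

/-- The rescaling endomorphism `t ↦ a·t` of the power series ring, as an `R`-linear map. -/
noncomputable def rescaleEnd (R : Type*) [CommRing R] (a : R) : Module.End R (PowerSeries R) where
  toFun := PowerSeries.rescale a
  map_add' f g := map_add _ f g
  map_smul' c f := by
    ext m
    simp only [PowerSeries.coeff_rescale, PowerSeries.coeff_smul, smul_eq_mul, RingHom.id_apply]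
    ring

theorem coeff_aeval_rescaleEnd {R : Type*} [CommRing R] (a : R) (p : Polynomial R)
    (f : PowerSeries R) (m : ℕ) :
    PowerSeries.coeff m (Polynomial.aeval (rescaleEnd R a) p f) =
      p.eval (a ^ m) * PowerSeries.coeff m f := by
  have h (g : PowerSeries R) :
      PowerSeries.coeff m (rescaleEnd R a g) = a ^ m * PowerSeries.coeff m g :=
    PowerSeries.coeff_rescale g a m
  induction p using Polynomial.induction_on generalizing f with
  | C c => simp [Module.algebraMap_end_apply]
  | add p q hp hq => simp [hp, hq, add_mul]
  | monomial n c ih =>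
    rw [pow_succ, ← mul_assoc, map_mul, Module.End.mul_apply, ih, Polynomial.aeval_X, h,
      Polynomial.eval_mul_X, mul_assoc]

/-- for a unit `a ∈ Rˣ` and `0 ≤ i < k`, the operator
`∏_{j=0}^{k-1} (a^{i+1-k}·(rescale a) − a^{j+1-k}·id)` maps every power series into `(t^{k-i})`. -/
theorem stmt2 (R : Type*) [CommRing R] (a : Rˣ) (i k : ℕ) (hik : i < k) (f : PowerSeries R) :
    (Polynomial.aeval (rescaleEnd R (a : R))
        (∏ j ∈ Finset.range k,
          (Polynomial.C ((a ^ ((i : ℤ) + 1 - (k : ℤ)) : Rˣ) : R) * Polynomial.X -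
            Polynomial.C ((a ^ ((j : ℤ) + 1 - (k : ℤ)) : Rˣ) : R)))) f
      ∈ Ideal.span {(PowerSeries.X : PowerSeries R) ^ (k - i)} := by
  rw [Ideal.mem_span_singleton, PowerSeries.X_pow_dvd_iff]
  intro m hm
  rw [coeff_aeval_rescaleEnd, Polynomial.eval_prod,
    Finset.prod_eq_zero (i := m + i) (Finset.mem_range.2 (by omega)), zero_mul]
  have e : a ^ ((i : ℤ) + 1 - k) * a ^ m = a ^ (((m + i : ℕ) : ℤ) + 1 - k) := by
    rw [← zpow_natCast a m, ← zpow_add]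
    congr 1
    push_cast
    ring
  rw [← e]
  simp
end

section
/- Let K be a field, let a ∈ K satisfy a ≠ 0 and a^r ≠ 1 for every integer r ≥ 1, and let k ≥ 1 be an integer. Define the additive map Σ : K[[t]] × K[[t]] → K[[t]] × K[[t]] by Σ(A, B) = (rescale a A, a^k·(rescale a B)). Then the intersection ⋂_{i=0}^{k−1} range(Σ − a^i·id) equals (t^k) × K[[t]], i.e. the set of pairs (A, B) with A ∈ (t^k). -/
/-!
The operator `Σ - a^i` is diagonal in the monomial basis: it multiplies the `m`-th coefficient of
the first component by `a^m - a^i`, and that of the second component by `a^(k+m) - a^i`. Since `a`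
is nonzero and not a root of unity, the powers of `a` are pairwise distinct
(`pow_injective_of_not_root_of_unity`), so for `i < k` the only vanishing factor is the one on the
`i`-th coefficient of the first component. Hence the range of `Σ - a^i` is the set of pairs `(A, B)`
whose `A` has zero `i`-th coefficient (`mem_range_sub_iff`); intersecting over `i < k` gives the
pairs with `A ∈ (t^k)`.
-/

theorem pow_injective_of_not_root_of_unity {K : Type*} [Field K] {a : K} (ha : a ≠ 0)
    (h : ∀ r : ℕ, 1 ≤ r → a ^ r ≠ 1) : Function.Injective (fun n : ℕ => a ^ n) := by
  have key : ∀ m n : ℕ, m < n → a ^ m ≠ a ^ n := fun m n hmn e => by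
    refine h (n - m) (by omega) (mul_left_cancel₀ (pow_ne_zero m ha) ?_)
    rw [← pow_add, Nat.add_sub_cancel' hmn.le, mul_one, e]
  intro m n e
  rcases lt_trichotomy m n with hmn | hmn | hmn
  · exact absurd e (key m n hmn)
  · exact hmn
  · exact absurd e.symm (key n m hmn)

theorem mem_range_sub_iff {K : Type*} [Field K] {a : K} (ha : a ≠ 0)
    (h : ∀ r : ℕ, 1 ≤ r → a ^ r ≠ 1) {k i : ℕ} (hi : i < k) (w : PowerSeries K × PowerSeries K) :
    w ∈ Set.range (fun z : PowerSeries K × PowerSeries K =>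
          (PowerSeries.rescale a z.1, a ^ k • PowerSeries.rescale a z.2) - a ^ i • z)
      ↔ PowerSeries.coeff i w.1 = 0 := by
  have hinj := pow_injective_of_not_root_of_unity ha h
  constructor
  · rintro ⟨z, rfl⟩
    simp [PowerSeries.coeff_rescale]
  · intro hw
    -- For `m = i` the first quotient is `0 / 0 = 0`, a legitimate choice as that coefficient is free.
    refine ⟨(PowerSeries.mk fun m => PowerSeries.coeff m w.1 / (a ^ m - a ^ i),
      PowerSeries.mk fun m => PowerSeries.coeff m w.2 / (a ^ (k + m) - a ^ i)), ?_⟩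
    refine Prod.ext (PowerSeries.ext fun m => ?_) (PowerSeries.ext fun m => ?_)
    · simp only [Prod.fst_sub, Prod.smul_fst, map_sub, PowerSeries.coeff_rescale,
        PowerSeries.coeff_smul, PowerSeries.coeff_mk, smul_eq_mul]
      rw [← sub_mul]
      by_cases hm : m = i
      · subst hm
        simp [hw]
      · exact mul_div_cancel₀ _ (sub_ne_zero.mpr fun e => hm (hinj e))
    · simp only [Prod.snd_sub, Prod.smul_snd, map_sub, PowerSeries.coeff_rescale,
        PowerSeries.coeff_smul, PowerSeries.coeff_mk, smul_eq_mul]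
      rw [← mul_assoc, ← pow_add, ← sub_mul]
      exact mul_div_cancel₀ _ (sub_ne_zero.mpr fun e => by have := hinj e; omega)


/-- for `Σ(A,B) = (rescale a A, a^k·rescale a B)` with `a` not a root of unity and
`k ≥ 1`, one has `⋂_{i=0}^{k-1} range(Σ − a^i·id) = (t^k) × K[[t]]`. -/
theorem stmt5 (K : Type*) [Field K] (a : K) (ha : a ≠ 0)
    (h : ∀ r : ℕ, 1 ≤ r → a ^ r ≠ 1) (k : ℕ) (hk : 1 ≤ k) :
    (⋂ i ∈ Finset.range k,
        Set.range (fun z : PowerSeries K × PowerSeries K =>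
          (PowerSeries.rescale a z.1, a ^ k • PowerSeries.rescale a z.2) - a ^ i • z))
      = {z : PowerSeries K × PowerSeries K |
          z.1 ∈ Ideal.span {(PowerSeries.X : PowerSeries K) ^ k}} := by
  ext w
  simp only [Set.mem_iInter, Finset.mem_range, Set.mem_setOf_eq, Ideal.mem_span_singleton,
    PowerSeries.X_pow_dvd_iff]
  exact forall₂_congr fun i hi => mem_range_sub_iff ha h hi w
end

section
/- Let K be a field, let a ∈ K satisfy a ≠ 0 and a^r ≠ 1 for every integer r ≥ 1, let k ≥ 1 be an integer and let c ∈ K. Define the additive map Σ : K[[t]]⁴ → K[[t]]⁴ by Σ(A, B, C, D) = (rescale a A + c·t^k·(rescale a D), a^k·(rescale a B), rescale a C, a^k·(rescale a D)). Then the intersection ⋂_{i=0}^{k−1} range(Σ − a^i·id) equals the set {(A, B, C, D) ∈ K[[t]]⁴ : A ∈ (t^k) and C ∈ (t^k)}. -/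
/-!
On coefficients of degree `m`, the operator `a ^ j • rescale a - a ^ i` is multiplication by
`a ^ (j + m) - a ^ i`, which vanishes only for `j + m = i` because `a` is not a root of unity.
So its image consists of the series with no term of degree `m` with `j + m = i`
(`exists_rescale_sub_eq`). For `i < k` this makes the second and fourth components of
`Σ - a ^ i` surjective (`j = k`), while in the first and third (`j = 0`) exactly the
coefficient of degree `i` is lost. The coupling term `c • X ^ k * rescale a D` only affects degrees
`≥ k > i`, so it can be absorbed into the first component without changing that condition.
Intersecting over `i < k` kills exactly the coefficients of degree `< k` of `A` and `C`.
-/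

/-- Powers of a nonzero element that is not a root of unity are pairwise distinct. -/
theorem pow_inj_of_not_root {K : Type*} [Field K] {a : K} (ha : a ≠ 0)
    (h : ∀ r : ℕ, 1 ≤ r → a ^ r ≠ 1) {m n : ℕ} (hmn : a ^ m = a ^ n) : m = n := by
  have key : ∀ p q : ℕ, p < q → a ^ p ≠ a ^ q := by
    intro p q hpq he
    apply h (q - p) (by omega)
    have h2 : a ^ p * a ^ (q - p) = a ^ p * 1 := by
      rw [← pow_add, Nat.add_sub_cancel' hpq.le, ← he, mul_one]
    exact mul_left_cancel₀ (pow_ne_zero p ha) h2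
  rcases lt_trichotomy m n with hlt | heq | hgt
  · exact absurd hmn (key m n hlt)
  · exact heq
  · exact absurd hmn.symm (key n m hgt)

/-- The diagonal operator `a ^ j • rescale a - a ^ i` hits every series whose coefficient in the
resonant degree `i - j` (if there is one) vanishes. -/
theorem exists_rescale_sub_eq {K : Type*} [Field K] {a : K} (ha : a ≠ 0)
    (h : ∀ r : ℕ, 1 ≤ r → a ^ r ≠ 1) (j i : ℕ) (F : PowerSeries K)
    (hF : ∀ m, j + m = i → PowerSeries.coeff m F = 0) :
    ∃ G : PowerSeries K, a ^ j • PowerSeries.rescale a G - a ^ i • G = F := by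
  -- In the resonant degree the division below is by zero, and both sides vanish.
  refine ⟨PowerSeries.mk fun m => PowerSeries.coeff m F / (a ^ (j + m) - a ^ i), ?_⟩
  ext m
  simp only [map_sub, PowerSeries.coeff_smul, PowerSeries.coeff_rescale, PowerSeries.coeff_mk,
    smul_eq_mul]
  by_cases hm : j + m = i
  · simp [hF m hm]
  · have hne : a ^ (j + m) - a ^ i ≠ 0 :=
      sub_ne_zero.mpr fun he => hm (pow_inj_of_not_root ha h he)
    rw [← mul_assoc, ← pow_add, ← sub_mul, mul_div_cancel₀ _ hne]


/-- for `Σ(A,B,C,D) = (rescale a A + c·t^k·rescale a D, a^k·rescale a B,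
rescale a C, a^k·rescale a D)` with `a` not a root of unity and `k ≥ 1`, one has
`⋂_{i=0}^{k-1} range(Σ − a^i·id) = {(A,B,C,D) : A ∈ (t^k) ∧ C ∈ (t^k)}`. -/
theorem stmt6 (K : Type*) [Field K] (a : K) (ha : a ≠ 0)
    (h : ∀ r : ℕ, 1 ≤ r → a ^ r ≠ 1) (k : ℕ) (hk : 1 ≤ k) (c : K) :
    (⋂ i ∈ Finset.range k,
        Set.range (fun z : PowerSeries K × PowerSeries K × PowerSeries K × PowerSeries K =>
          (PowerSeries.rescale a z.1 +
              c • ((PowerSeries.X : PowerSeries K) ^ k * PowerSeries.rescale a z.2.2.2),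
            a ^ k • PowerSeries.rescale a z.2.1,
            PowerSeries.rescale a z.2.2.1,
            a ^ k • PowerSeries.rescale a z.2.2.2) - a ^ i • z))
      = {z : PowerSeries K × PowerSeries K × PowerSeries K × PowerSeries K |
          z.1 ∈ Ideal.span {(PowerSeries.X : PowerSeries K) ^ k} ∧
          z.2.2.1 ∈ Ideal.span {(PowerSeries.X : PowerSeries K) ^ k}} := by
  ext ⟨A, B, C, D⟩
  simp only [Set.mem_iInter, Finset.mem_range, Set.mem_range, Set.mem_setOf_eq,
    Ideal.mem_span_singleton, PowerSeries.X_pow_dvd_iff]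
  constructor
  · intro hz
    refine ⟨fun i hi => ?_, fun i hi => ?_⟩
    · obtain ⟨⟨A', B', C', D'⟩, he⟩ := hz i hi
      have h1 := congrArg (fun z => PowerSeries.coeff i z.1) he
      simpa [PowerSeries.coeff_X_pow_mul', not_le.mpr hi] using h1.symm
    · obtain ⟨⟨A', B', C', D'⟩, he⟩ := hz i hi
      have h1 := congrArg (fun z => PowerSeries.coeff i z.2.2.1) he
      simpa using h1.symm
  · rintro ⟨hA, hC⟩ i hi
    obtain ⟨B', hB'⟩ := exists_rescale_sub_eq ha h k i B (fun m hm => by omega)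
    obtain ⟨D', hD'⟩ := exists_rescale_sub_eq ha h k i D (fun m hm => by omega)
    obtain ⟨C', hC'⟩ := exists_rescale_sub_eq ha h 0 i C (fun m hm => hC m (by omega))
    obtain ⟨A', hA'⟩ := exists_rescale_sub_eq ha h 0 i
      (A - c • ((PowerSeries.X : PowerSeries K) ^ k * PowerSeries.rescale a D')) (fun m hm => by
        have hmk : m < k := by omega
        simp [PowerSeries.coeff_X_pow_mul', not_le.mpr hmk, hA m hmk])
    rw [pow_zero, one_smul] at hA' hC'
    refine ⟨(A', B', C', D'), Prod.ext ?_ (Prod.ext hB' (Prod.ext hC' hD'))⟩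
    change PowerSeries.rescale a A' + c • (PowerSeries.X ^ k * PowerSeries.rescale a D')
      - a ^ i • A' = A
    rw [add_sub_right_comm, hA', sub_add_cancel]
end

section
/- Let R be a commutative ring, M an R-module, t ∈ R, and k ∈ ℕ. Let ∇ : M → M be an additive map satisfying ∇(t•m) = t•m + t•∇(m) for all m ∈ M, and let u : M → M be a map satisfying t•u(m) = k•∇(m) − ∇(∇(m)) for all m ∈ M. Then for every j ∈ ℕ and every z ∈ M one has t^j • u^{∘j}(z) = (∏_{i=0}^{j−1}(∇ − i)) ((∏_{i=0}^{j−1}((k+i) − ∇))(z)), where u^{∘j} is the j-fold iterate of u, ∇ − i denotes the additive map m ↦ ∇(m) − i•m, and (k+i) − ∇ denotes m ↦ (k+i)•m − ∇(m); these operators pairwise commute so the products are unambiguous. -/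
/-!
Commuting `∇` past `t ^ j` shifts it by `j`: `t^j • ∇ w = (∇ - j) (t^j • w)`. Applied to
`w = u^[j] z`, this gives
`t^(j+1) • u^[j+1] z = t^j • ∇ ((k - ∇) w) = (∇ - j) ((k + j) - ∇) (t^j • w)`,
so each further application of `t • u` contributes exactly the two factors of index `j`, and
induction on `j` concludes. Since all factors are polynomials in `∇`, they are handled as values of
`Polynomial.aeval` at `∇`, where commutativity is that of `ℤ[X]`.
-/

/-- The composite `F (j-1) ∘ ⋯ ∘ F 1 ∘ F 0` of a family of (pairwise commuting) operators. -/
def iterProd {M : Type*} (j : ℕ) (F : ℕ → M → M) : M → M :=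
  (List.range j).foldr (fun i g => F i ∘ g) id

/-- A composite of operators that are polynomials in one endomorphism `N` is the value at `N` of
the product polynomial; in particular the order of composition is irrelevant. -/
lemma iterProd_aeval {M : Type*} [AddCommGroup M] (N : Module.End ℤ M)
    (p : ℕ → Polynomial ℤ) (j : ℕ) (z : M) :
    iterProd j (fun i m => Polynomial.aeval N (p i) m) z =
      Polynomial.aeval N (∏ i ∈ Finset.range j, p i) z := by
  -- The initial function `g` of the fold is generalized so that the induction goes through.
  have key : ∀ (j : ℕ) (g : M → M),
      (List.range j).foldr (fun i g => (fun m => Polynomial.aeval N (p i) m) ∘ g) g z =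
        Polynomial.aeval N (∏ i ∈ Finset.range j, p i) (g z) := by
    intro j
    induction j with
    | zero => intro g; simp
    | succ j ih =>
      intro g
      rw [List.range_succ, List.foldr_append, ih, Finset.prod_range_succ, map_mul]
      rfl
  exact key j id

/-- The Leibniz rule iterated: `∇ (t^j • m) = t^j • ∇ m + j • (t^j • m)`. -/
lemma leibniz_pow {R M : Type*} [CommRing R] [AddCommGroup M] [Module R M]
    (t : R) (nab : M → M) (hleib : ∀ m : M, nab (t • m) = t • m + t • nab m) (j : ℕ) (m : M) :
    nab (t ^ j • m) = t ^ j • nab m + j • (t ^ j • m) := by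
  induction j with
  | zero => simp
  | succ j ih =>
    rw [pow_succ', mul_smul, hleib, ih, mul_smul, smul_add, smul_comm t j, succ_nsmul]
    abel

/-- if `∇` is additive with `∇(t•m) = t•m + t•∇m` and `t•u(m) = k•∇m − ∇²m`,
then `t^j • u^[j](z) = (∏_{i=0}^{j-1}(∇ − i)) ((∏_{i=0}^{j-1}((k+i) − ∇))(z))`. -/
theorem stmt8 (R : Type*) [CommRing R] (M : Type*) [AddCommGroup M] [Module R M]
    (t : R) (k : ℕ) (nab u : M → M)
    (hadd : ∀ x y : M, nab (x + y) = nab x + nab y)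
    (hleib : ∀ m : M, nab (t • m) = t • m + t • nab m)
    (hu : ∀ m : M, t • u m = k • nab m - nab (nab m)) :
    ∀ (j : ℕ) (z : M),
      (t ^ j) • (u^[j] z) =
        iterProd j (fun i m => nab m - i • m)
          (iterProd j (fun i m => (k + i) • m - nab m) z) := by
  intro j z
  let N : Module.End ℤ M := (AddMonoidHom.mk' nab hadd).toIntLinearMap
  have hN : ∀ m, N m = nab m := fun _ => rfl
  let p : ℕ → Polynomial ℤ := fun i => Polynomial.X - (i : Polynomial ℤ)
  let q : ℕ → Polynomial ℤ := fun i => ((k + i : ℕ) : Polynomial ℤ) - Polynomial.X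
  have hp : ∀ i m, Polynomial.aeval N (p i) m = nab m - i • m := by
    intro i m
    simp [p, hN]
  have hq : ∀ i m, Polynomial.aeval N (q i) m = (k + i) • m - nab m := by
    intro i m
    simp only [q, map_sub, map_natCast, Polynomial.aeval_X, LinearMap.sub_apply,
      Module.End.natCast_apply, hN]
  simp only [← hp, ← hq]
  rw [iterProd_aeval, iterProd_aeval]
  induction j with
  | zero => simp
  | succ j ih =>
    have step : t ^ (j + 1) • u^[j + 1] z =
        Polynomial.aeval N (p j * q j) (t ^ j • u^[j] z) := by
      rw [Function.iterate_succ_apply', pow_succ, mul_smul, hu, map_mul, Module.End.mul_apply,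
        hq, hp]
      generalize u^[j] z = w
      have h1 := leibniz_pow t nab hleib j w
      have h2 := leibniz_pow t nab hleib j (nab w)
      have h3 : (k + j) • (t ^ j • w) - nab (t ^ j • w) = t ^ j • (k • w - nab w) := by
        rw [h1, smul_sub, smul_comm (t ^ j) k, add_smul]
        abel
      have h4 : nab (k • w - nab w) = k • nab w - nab (nab w) := by
        simp only [← hN, map_sub, map_nsmul]
      rw [h3, leibniz_pow t nab hleib, h4]
      abel
    rw [step, ih, ← Module.End.mul_apply, ← Module.End.mul_apply, ← Module.End.mul_apply,
      ← map_mul, ← map_mul, ← map_mul, Finset.prod_range_succ, Finset.prod_range_succ]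
    congr 2
    ring
end

section
/- Let p be a prime and let Π be a complete normed ℚ_p-vector space whose norm is ultrametric (nonarchimedean). Let u : ℚ_p → (Π →L[ℚ_p] Π) satisfy u(0) = id and u(x + y) = u(x) ∘ u(y) for all x, y ∈ ℚ_p, and let v ∈ Π be such that the orbit map ℚ_p → Π, x ↦ u(x)(v), is continuous. Then for every integer k ≥ 1 the following are equivalent: (i) there exists n ∈ ℕ such that (u(p^n) − id)^{∘k}(v) = 0; (ii) there exists n ∈ ℕ such that for every a ∈ ℚ_p there are c_0, …, c_{k−1} ∈ Π with u(a + y)(v) = ∑_{i=0}^{k−1} y^i • c_i for all y ∈ p^n ℤ_p (i.e. the orbit map is locally polynomial of degree less than k). -/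
/-!
Write `h = p ^ n` and `D = u h - id`. Since `u` is a one-parameter group, the iterated forward
differences of the orbit map `x ↦ u x v` with step `h` are `x ↦ u x (D^j v)`
(`fwdDiff_iter_orbit`), so that `D^k v = 0` says exactly that the `k`-th difference vanishes.

If `D^k v = 0`, the Gregory-Newton formula gives `u (m h) v = ∑_{j < k} (m choose j) • D^j v` for
natural `m`. The right-hand side is a polynomial of degree `< k` in `m h` (characteristic zero), and
both sides are continuous in `m ∈ ℤ_p`, so the equality extends from `ℕ` to `ℤ_p` by density: this
is the polynomial expansion on `p ^ n ℤ_p`. Since the Mahler series is a finite sum here, its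
convergence theory is not needed. Applying `u a` moves the expansion to `a + p ^ n ℤ_p`.

Conversely, if the orbit map is polynomial of degree `< k` on `p ^ n ℤ_p`, its `k`-th difference
with step `p ^ n` at `0` vanishes; this difference is `D^k v`.
-/

/-- The `k`-th difference, with step `h`, of the orbit map is the orbit map of
`(u h - id)^k v`. -/
theorem fwdDiff_iter_orbit {K E : Type*} [NontriviallyNormedField K] [NormedAddCommGroup E]
    [NormedSpace K E] (u : K → (E →L[K] E))
    (huadd : ∀ x y : K, u (x + y) = (u x).comp (u y)) (h : K) (k : ℕ) (v : E) :
    (fwdDiff h)^[k] (fun x => u x v) = fun x => u x ((fun w : E => u h w - w)^[k] v) := by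
  induction k generalizing v with
  | zero => rfl
  | succ k ih =>
    rw [Function.iterate_succ_apply, Function.iterate_succ_apply, ← ih]
    congr 1
    ext x
    simp [fwdDiff, huadd]

open Finset in
/-- The `k`-th difference at `0` of a vector-valued polynomial function of degree `< k` vanishes, for
any step `h`. -/
theorem sum_diff_polynomial_eq_zero {K E : Type*} [Field K] [AddCommGroup E] [Module K E]
    (h : K) (k : ℕ) (c : Fin k → E) :
    ∑ m ∈ range (k + 1), ((-1 : ℤ) ^ (k - m) * k.choose m) •
      ∑ i : Fin k, ((m : K) * h) ^ (i : ℕ) • c i = 0 := by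
  simp_rw [smul_sum]
  rw [sum_comm]
  refine sum_eq_zero fun i _ => ?_
  have h0 := congr_fun (fwdDiff_iter_pow_eq_zero_of_lt (R := K) i.2) 0
  rw [fwdDiff_iter_eq_sum_shift] at h0
  have h1 := congrArg (fun t : K => t • (h ^ (i : ℕ) • c i)) h0
  simp only [Pi.zero_apply, zero_smul, sum_smul] at h1
  rw [← h1]
  refine sum_congr rfl fun m _ => ?_
  rw [smul_assoc, smul_smul]
  simp [mul_pow]

open Polynomial in
/-- In characteristic zero, `m h ↦ (m choose j)` is a polynomial function of degree `≤ j`. -/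
theorem exists_polynomial_choose {K : Type*} [Field K] [CharZero K] (h : K) (hh : h ≠ 0) (j : ℕ) :
    ∃ P : K[X], P.natDegree ≤ j ∧ ∀ m : ℕ, P.eval (h * m) = (m.choose j : K) := by
  refine ⟨C ((j.factorial : K)⁻¹) * (descPochhammer K j).comp (C h⁻¹ * X), ?_, fun m => ?_⟩
  · refine (natDegree_C_mul_le _ _).trans (natDegree_comp_le.trans ?_)
    rw [descPochhammer_natDegree]
    exact (Nat.mul_le_mul_left _ ((natDegree_C_mul_le _ _).trans natDegree_X_le)).trans (by simp)
  · simp only [eval_mul, eval_C, eval_comp, eval_X]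
    rw [inv_mul_cancel_left₀ hh, Nat.cast_choose_eq_descPochhammer_div, div_eq_inv_mul]

/-- for a one-parameter group `u : ℚ_p → GL(E)` acting on a nonarchimedean
`ℚ_p`-Banach space `E` with continuous orbit map at `v`, and `k ≥ 1`, the condition
`∃ n, (u(p^n) − id)^{∘k} v = 0` is equivalent to the orbit map being locally polynomial of
degree `< k` on balls `a + p^n ℤ_p`. -/
theorem stmt9 (p : ℕ) [Fact p.Prime] (E : Type*) [NormedAddCommGroup E]
    [NormedSpace ℚ_[p] E] [CompleteSpace E] [IsUltrametricDist E]
    (u : ℚ_[p] → (E →L[ℚ_[p]] E))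
    (hu0 : u 0 = ContinuousLinearMap.id ℚ_[p] E)
    (huadd : ∀ x y : ℚ_[p], u (x + y) = (u x).comp (u y))
    (v : E) (hcont : Continuous fun x : ℚ_[p] => u x v) :
    ∀ k : ℕ, 1 ≤ k →
      ((∃ n : ℕ, (fun w : E => u ((p : ℚ_[p]) ^ n) w - w)^[k] v = 0) ↔
        (∃ n : ℕ, ∀ a : ℚ_[p], ∃ c : Fin k → E,
          ∀ y : ℚ_[p], ‖y‖ ≤ (p : ℝ) ^ (-(n : ℤ)) →
            u (a + y) v = ∑ i : Fin k, y ^ (i : ℕ) • c i)) := by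
  intro k _
  have hp0 : (p : ℚ_[p]) ≠ 0 := by exact_mod_cast (Fact.out : p.Prime).ne_zero
  refine exists_congr fun n => ⟨fun hk => ?_, fun hpoly => ?_⟩
  · set h : ℚ_[p] := (p : ℚ_[p]) ^ n with hh
    have hne : h ≠ 0 := pow_ne_zero _ hp0
    set D : E → E := fun w => u h w - w with hD
    have hvanish : ∀ j, k ≤ j → D^[j] v = 0 := fun j hj => by
      obtain ⟨i, rfl⟩ := Nat.exists_eq_add_of_le' hj
      rw [Function.iterate_add_apply, hk]
      exact Function.iterate_fixed (by simp [hD]) i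
    have newton (m : ℕ) : u (h * m) v =
        ∑ j ∈ Finset.range k, (m.choose j : ℚ_[p]) • D^[j] v := by
      have := shift_eq_sum_fwdDiff_iter h (fun x => u x v) m 0
      simp only [fwdDiff_iter_orbit u huadd, hu0, ContinuousLinearMap.id_apply, zero_add,
        nsmul_eq_mul] at this
      rw [mul_comm, this]
      -- Both sums agree with the sum over `range (m + 1 + k)`: the extra terms vanish because
      -- `m.choose j = 0` for `j > m`, respectively `D^[j] v = 0` for `j ≥ k`.
      trans ∑ j ∈ Finset.range (m + 1 + k), (m.choose j : ℚ_[p]) • D^[j] v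
      · simp_rw [← Nat.cast_smul_eq_nsmul ℚ_[p]]
        refine Finset.sum_subset (Finset.range_subset_range.2 (Nat.le_add_right _ _))
          fun j _ hj => ?_
        have hmj : m < j := by
          rw [Finset.mem_range] at hj
          omega
        rw [Nat.choose_eq_zero_of_lt hmj, Nat.cast_zero, zero_smul]
      · refine (Finset.sum_subset (Finset.range_subset_range.2 (Nat.le_add_left _ _))
          fun j _ hj => ?_).symm
        rw [hvanish j (by simpa using hj), smul_zero]
    choose P hPdeg hPeval using exists_polynomial_choose (K := ℚ_[p]) h hne
    have key (z : ℤ_[p]) : u (h * z) v =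
        ∑ j ∈ Finset.range k, (P j).eval (h * (z : ℚ_[p])) • D^[j] v := by
      refine congr_fun (PadicInt.denseRange_natCast.equalizer
        (g := fun z : ℤ_[p] => u (h * z) v)
        (h := fun z : ℤ_[p] => ∑ j ∈ Finset.range k, (P j).eval (h * (z : ℚ_[p])) • D^[j] v)
        ?_ ?_ ?_) z
      · exact hcont.comp (by fun_prop)
      · refine continuous_finsetSum _ fun j _ => ?_
        exact ((P j).continuous.comp (by fun_prop)).smul continuous_const
      · ext m
        simp [newton, hPeval]
    intro a
    refine ⟨fun i => u a (∑ j ∈ Finset.range k, (P j).coeff i • D^[j] v), fun y hy => ?_⟩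
    have hz : ‖h⁻¹ * y‖ ≤ 1 := by
      rw [norm_mul, norm_inv, hh, Padic.norm_p_pow]
      have : 0 < (p : ℝ) ^ (-(n : ℤ)) :=
        zpow_pos (by exact_mod_cast (Fact.out : p.Prime).pos) _
      rwa [inv_mul_le_iff₀ this, mul_one]
    have hy' := key ⟨h⁻¹ * y, hz⟩
    simp only [mul_inv_cancel_left₀ hne] at hy'
    rw [huadd, ContinuousLinearMap.comp_apply, hy']
    simp_rw [← map_smul, ← map_sum]
    congr 1
    simp_rw [Finset.smul_sum]
    rw [Finset.sum_comm]
    refine Finset.sum_congr rfl fun j hj => ?_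
    rw [Polynomial.eval_eq_sum_range' ((hPdeg j).trans_lt (Finset.mem_range.1 hj)), Finset.sum_smul,
      ← Fin.sum_univ_eq_sum_range (fun i => ((P j).coeff i * y ^ i) • D^[j] v)]
    refine Finset.sum_congr rfl fun i _ => ?_
    rw [smul_smul, mul_comm]
  · obtain ⟨c, hc⟩ := hpoly 0
    have h1 := congr_fun (fwdDiff_iter_orbit u huadd ((p : ℚ_[p]) ^ n) k v) 0
    simp only [hu0, ContinuousLinearMap.id_apply] at h1
    rw [← h1, fwdDiff_iter_eq_sum_shift, ← sum_diff_polynomial_eq_zero ((p : ℚ_[p]) ^ n) k c]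
    refine Finset.sum_congr rfl fun m _ => ?_
    rw [nsmul_eq_mul, hc]
    rw [norm_mul, Padic.norm_p_pow]
    refine mul_le_of_le_one_left (zpow_nonneg (Nat.cast_nonneg p) _) ?_
    exact_mod_cast Padic.norm_int_le_one (p := p) m
end
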